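/- Let A and B be n×n matrices with nonnegative real entries such that Tr(A ⊕ B) ≤ 1. Then (A ⊕ B)* = A* ⊕ B* ⊕ max_{k=1,…,n−2} max_{m=1,…,n−k−1} F_{km} (entrywise maximum), where F_{km} denotes the entrywise maximum, over all tuples of nonnegative integers (i_0, i_1, …, i_k) with i_0 + i_1 + ⋯ + i_k = m, of the max-times products A^{⊗i_0} ⊗ B ⊗ A^{⊗i_1} ⊗ B ⊗ ⋯ ⊗ B ⊗ A^{⊗i_k} (with exactly k factors B). -/

import Mathlib

/-!
Expanding `(A ⊕ B)^{⊗l}` gives the entrywise maximum of all words of length `l` in the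
noncommuting letters `A`, `B`; a word with `k` letters `B` and `m` letters `A` is exactly one
of the alternating products `A^{⊗v 0} ⊗ B ⊗ ⋯ ⊗ B ⊗ A^{⊗v k}` with `∑ v = m` and `k + m = l`.
The Kleene star collects the lengths `l ≤ n - 1`. Words with `k = 0` contribute `A*`, words
with `m = 0` contribute `B*`, and the remaining words are those with `1 ≤ k ≤ n - 2` and
`1 ≤ m ≤ n - k - 1`.

`exists_chain_ge` is the upper bound (every entry of the power of `A ⊕ B` is dominated by the
entry of some word), and `mtChain_le_mtPow` is the lower bound (every word of length `l` in
matrices below `C` is dominated by `C^{⊗l}`). All entries are nonnegative, so the real suprema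
over empty or non-member indices, which Lean evaluates to `0`, are harmless.
-/

open scoped BigOperators

/-- Max-times matrix product: `(A ⊗ B) i j = max_k A i k * B k j`. -/
noncomputable def mtMul {n : ℕ} (A B : Matrix (Fin n) (Fin n) ℝ) : Matrix (Fin n) (Fin n) ℝ :=
  fun i j => ⨆ k, A i k * B k j

/-- Max-times matrix power, with `A^{⊗0}` the identity matrix. -/
noncomputable def mtPow {n : ℕ} (A : Matrix (Fin n) (Fin n) ℝ) : ℕ → Matrix (Fin n) (Fin n) ℝ
  | 0 => 1
  | k + 1 => mtMul A (mtPow A k)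

/-- Tropical trace: `tr A = max_i A i i`. -/
noncomputable def mtTrace {n : ℕ} (A : Matrix (Fin n) (Fin n) ℝ) : ℝ :=
  ⨆ i, A i i

/-- The function `Tr(A) = max_{k=1,…,n} tr(A^{⊗k})`. -/
noncomputable def mtTr {n : ℕ} (A : Matrix (Fin n) (Fin n) ℝ) : ℝ :=
  ⨆ k ∈ Finset.Icc 1 n, mtTrace (mtPow A k)

/-- Kleene star: entrywise maximum of `I, A, A^{⊗2}, …, A^{⊗(n-1)}`. -/
noncomputable def mtStar {n : ℕ} (A : Matrix (Fin n) (Fin n) ℝ) : Matrix (Fin n) (Fin n) ℝ :=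
  fun i j => ⨆ k ∈ Finset.range n, mtPow A k i j

/-- Max-times matrix-vector product: `(A ⊗ x) i = max_j A i j * x j`. -/
noncomputable def mtVec {n : ℕ} (A : Matrix (Fin n) (Fin n) ℝ) (x : Fin n → ℝ) : Fin n → ℝ :=
  fun i => ⨆ j, A i j * x j

/-- The alternating product `A^{⊗v 0} ⊗ B ⊗ A^{⊗v 1} ⊗ B ⊗ ⋯ ⊗ B ⊗ A^{⊗v k}`
(with exactly `k` factors `B`). -/
noncomputable def mtChain {n : ℕ} (A B : Matrix (Fin n) (Fin n) ℝ) :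
    (k : ℕ) → (Fin (k + 1) → ℕ) → Matrix (Fin n) (Fin n) ℝ
  | 0, v => mtPow A (v 0)
  | k + 1, v => mtMul (mtPow A (v 0)) (mtMul B (mtChain A B k fun t => v t.succ))

/-- `F_{km}`: the entrywise maximum, over all tuples `(i_0,…,i_k)` of nonnegative integers
with `i_0 + ⋯ + i_k = m`, of the products `A^{⊗i_0} ⊗ B ⊗ A^{⊗i_1} ⊗ ⋯ ⊗ B ⊗ A^{⊗i_k}`. -/
noncomputable def mtF {n : ℕ} (A B : Matrix (Fin n) (Fin n) ℝ) (k m : ℕ) :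
    Matrix (Fin n) (Fin n) ℝ :=
  fun i j => ⨆ v : { v : Fin (k + 1) → ℕ // ∑ t, v t = m }, mtChain A B k v.1 i j

/-- `h^− M g = max_{i,j} M i j * g j / h i`. -/
noncomputable def mtHMG {n : ℕ} (h : Fin n → ℝ) (M : Matrix (Fin n) (Fin n) ℝ)
    (g : Fin n → ℝ) : ℝ :=
  ⨆ i, ⨆ j, M i j * g j / h i

theorem le_biSup_finset {s : Finset ℕ} {f : ℕ → ℝ} {k : ℕ} (hk : k ∈ s) :
    f k ≤ ⨆ k ∈ s, f k := by
  have hbdd : BddAbove (Set.range fun k => ⨆ (_ : k ∈ s), f k) := by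
    refine Set.Finite.bddAbove (((s.finite_toSet.image f).insert 0).subset ?_)
    rintro _ ⟨q, rfl⟩
    by_cases hq : q ∈ s
    · exact Or.inr ⟨q, hq, by simp [hq]⟩
    · exact Or.inl (by simp [hq])
  have h := le_ciSup hbdd k
  simpa [hk] using h

theorem biSup_finset_le {s : Finset ℕ} {f : ℕ → ℝ} {c : ℝ} (hc : 0 ≤ c)
    (h : ∀ k ∈ s, f k ≤ c) : ⨆ k ∈ s, f k ≤ c :=
  Real.iSup_le (fun k => Real.iSup_le (fun hk => h k hk) hc) hc

section MaxTimes

variable {n : ℕ} {A B C : Matrix (Fin n) (Fin n) ℝ}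

theorem le_mtMul (A B : Matrix (Fin n) (Fin n) ℝ) (i p j : Fin n) :
    A i p * B p j ≤ mtMul A B i j :=
  le_ciSup (f := fun p => A i p * B p j) (Set.finite_range _).bddAbove p

theorem exists_mtMul_eq (A B : Matrix (Fin n) (Fin n) ℝ) (i j : Fin n) :
    ∃ p, A i p * B p j = mtMul A B i j :=
  haveI : Nonempty (Fin n) := ⟨i⟩
  exists_eq_ciSup_of_finite (f := fun p => A i p * B p j)

theorem mtMul_nonneg (hA : ∀ i j, 0 ≤ A i j) (hB : ∀ i j, 0 ≤ B i j) (i j : Fin n) :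
    0 ≤ mtMul A B i j :=
  Real.iSup_nonneg fun p => mul_nonneg (hA i p) (hB p j)

theorem mtPow_nonneg (hA : ∀ i j, 0 ≤ A i j) (k : ℕ) : ∀ i j, 0 ≤ mtPow A k i j := by
  induction k with
  | zero =>
    intro i j
    simp only [mtPow, Matrix.one_apply]
    split_ifs <;> norm_num
  | succ k ih => exact mtMul_nonneg hA ih

theorem mtChain_nonneg (hA : ∀ i j, 0 ≤ A i j) (hB : ∀ i j, 0 ≤ B i j) (k : ℕ) :
    ∀ (v : Fin (k + 1) → ℕ) (i j : Fin n), 0 ≤ mtChain A B k v i j := by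
  induction k with
  | zero => exact fun v => mtPow_nonneg hA _
  | succ k ih =>
    exact fun v => mtMul_nonneg (mtPow_nonneg hA _) (mtMul_nonneg hB (ih _))

theorem mtPow_mul_le (hC : ∀ i j, 0 ≤ C i j) (a b : ℕ) :
    ∀ i p j, mtPow C a i p * mtPow C b p j ≤ mtPow C (a + b) i j := by
  induction a with
  | zero =>
    intro i p j
    by_cases h : i = p
    · subst h
      simp [mtPow]
    · simpa [mtPow, Matrix.one_apply_ne h] using mtPow_nonneg hC b i j
  | succ a ih =>
    intro i p j
    obtain ⟨q, hq⟩ := exists_mtMul_eq C (mtPow C a) i p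
    rw [Nat.add_right_comm]
    change mtMul C (mtPow C a) i p * _ ≤ mtMul C (mtPow C (a + b)) i j
    rw [← hq, mul_assoc]
    exact (mul_le_mul_of_nonneg_left (ih q p j) (hC i q)).trans (le_mtMul _ _ _ _ _)

theorem mtPow_mono (hA : ∀ i j, 0 ≤ A i j) (hAC : ∀ i j, A i j ≤ C i j) (k : ℕ) :
    ∀ i j, mtPow A k i j ≤ mtPow C k i j := by
  induction k with
  | zero => exact fun i j => le_rfl
  | succ k ih =>
    intro i j
    obtain ⟨p, hp⟩ := exists_mtMul_eq A (mtPow A k) i j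
    change mtMul A (mtPow A k) i j ≤ mtMul C (mtPow C k) i j
    rw [← hp]
    exact (mul_le_mul (hAC i p) (ih p j) (mtPow_nonneg hA k p j)
      ((hA i p).trans (hAC i p))).trans (le_mtMul _ _ _ _ _)

/-- A word with `k` letters `B` and `∑ v` letters `A` has length `k + ∑ v`, so it is dominated by
the corresponding power of any common upper bound `C` of `A` and `B`. -/
theorem mtChain_le_mtPow (hA : ∀ i j, 0 ≤ A i j) (hB : ∀ i j, 0 ≤ B i j)
    (hAC : ∀ i j, A i j ≤ C i j) (hBC : ∀ i j, B i j ≤ C i j) (k : ℕ) :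
    ∀ (v : Fin (k + 1) → ℕ) (i j : Fin n),
      mtChain A B k v i j ≤ mtPow C (k + ∑ t, v t) i j := by
  have hC : ∀ i j, 0 ≤ C i j := fun i j => (hA i j).trans (hAC i j)
  induction k with
  | zero =>
    intro v i j
    simpa [mtChain] using mtPow_mono hA hAC (v 0) i j
  | succ k ih =>
    intro v i j
    obtain ⟨p, hp⟩ := exists_mtMul_eq (mtPow A (v 0))
      (mtMul B (mtChain A B k fun t => v t.succ)) i j
    obtain ⟨q, hq⟩ := exists_mtMul_eq B (mtChain A B k fun t => v t.succ) p j
    have h1 : mtMul B (mtChain A B k fun t => v t.succ) p j ≤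
        mtPow C ((k + ∑ t : Fin (k + 1), v t.succ) + 1) p j := by
      rw [← hq]
      exact (mul_le_mul (hBC p q) (ih _ q j) (mtChain_nonneg hA hB k _ q j)
        (hC p q)).trans (le_mtMul _ _ _ _ _)
    have hlen : k + 1 + ∑ t, v t = v 0 + ((k + ∑ t : Fin (k + 1), v t.succ) + 1) := by
      rw [Fin.sum_univ_succ]
      ring
    change mtMul _ _ i j ≤ _
    rw [← hp, hlen]
    exact (mul_le_mul (mtPow_mono hA hAC _ i p) h1
      (mtMul_nonneg hB (mtChain_nonneg hA hB k _) p j)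
      (mtPow_nonneg hC _ i p)).trans (mtPow_mul_le hC _ _ _ _ _)

/-- Prepending the letter `A` to a word. -/
theorem mul_mtChain_le_succ (hA : ∀ i j, 0 ≤ A i j) (hB : ∀ i j, 0 ≤ B i j) (k : ℕ)
    (v : Fin (k + 1) → ℕ) (i p j : Fin n) :
    A i p * mtChain A B k v p j ≤
      mtChain A B k (Fin.cons (v 0 + 1) fun t => v t.succ) i j := by
  cases k with
  | zero => exact le_mtMul A (mtPow A (v 0)) i p j
  | succ k =>
    obtain ⟨q, hq⟩ := exists_mtMul_eq (mtPow A (v 0))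
      (mtMul B (mtChain A B k fun t => v t.succ)) p j
    change A i p * mtMul _ _ p j ≤ mtMul (mtPow A (v 0 + 1))
      (mtMul B (mtChain A B k fun t => v t.succ)) i j
    rw [← hq, ← mul_assoc]
    exact (mul_le_mul_of_nonneg_right (le_mtMul A (mtPow A (v 0)) i p q)
      (mtMul_nonneg hB (mtChain_nonneg hA hB k _) q j)).trans (le_mtMul _ _ _ _ _)

/-- Prepending the letter `B` to a word. -/
theorem mul_mtChain_le_cons (k : ℕ) (v : Fin (k + 1) → ℕ) (i p j : Fin n) :
    B i p * mtChain A B k v p j ≤ mtChain A B (k + 1) (Fin.cons 0 v) i j := by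
  have h := le_mtMul (1 : Matrix (Fin n) (Fin n) ℝ) (mtMul B (mtChain A B k v)) i i j
  rw [Matrix.one_apply_eq, one_mul] at h
  exact (le_mtMul B (mtChain A B k v) i p j).trans h

/-- The maximum defining an entry of `(A ⊕ B)^{⊗l}` is attained along a path, whose letters
spell a word of length `l`. -/
theorem exists_chain_ge (hA : ∀ i j, 0 ≤ A i j) (hB : ∀ i j, 0 ≤ B i j) (l : ℕ) :
    ∀ i j : Fin n, ∃ (k : ℕ) (v : Fin (k + 1) → ℕ), k + ∑ t, v t = l ∧
      mtPow (fun i j => max (A i j) (B i j)) l i j ≤ mtChain A B k v i j := by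
  induction l with
  | zero => exact fun i j => ⟨0, fun _ => 0, by simp, le_rfl⟩
  | succ l ih =>
    intro i j
    obtain ⟨p, hp⟩ := exists_mtMul_eq (fun i j => max (A i j) (B i j))
      (mtPow (fun i j => max (A i j) (B i j)) l) i j
    obtain ⟨k, v, hl, hv⟩ := ih p j
    have hstep : mtPow (fun i j => max (A i j) (B i j)) (l + 1) i j ≤
        max (A i p) (B i p) * mtChain A B k v p j :=
      hp.symm.le.trans (mul_le_mul_of_nonneg_left hv (le_max_of_le_left (hA i p)))
    rcases le_total (B i p) (A i p) with h | h
    · rw [max_eq_left h] at hstep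
      refine ⟨k, Fin.cons (v 0 + 1) fun t => v t.succ, ?_,
        hstep.trans (mul_mtChain_le_succ hA hB k v i p j)⟩
      rw [Fin.sum_univ_succ] at hl ⊢
      simp only [Fin.cons_zero, Fin.cons_succ]
      omega
    · rw [max_eq_right h] at hstep
      refine ⟨k + 1, Fin.cons 0 v, ?_, hstep.trans (mul_mtChain_le_cons k v i p j)⟩
      rw [Fin.sum_univ_succ]
      simp only [Fin.cons_zero, Fin.cons_succ]
      omega

/-- A word without letters `A` is a power of `B`. -/
theorem mtChain_zero_le (hB : ∀ i j, 0 ≤ B i j) (k : ℕ) :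
    ∀ (v : Fin (k + 1) → ℕ), (∀ t, v t = 0) → ∀ i j : Fin n,
      mtChain A B k v i j ≤ mtPow B k i j := by
  induction k with
  | zero =>
    intro v hv i j
    simp [mtChain, hv, mtPow]
  | succ k ih =>
    intro v hv i j
    obtain ⟨p, hp⟩ := exists_mtMul_eq (mtPow A (v 0))
      (mtMul B (mtChain A B k fun t => v t.succ)) i j
    change mtMul _ _ i j ≤ _
    rw [← hp, hv 0]
    by_cases h : i = p
    · subst h
      obtain ⟨q, hq⟩ := exists_mtMul_eq B (mtChain A B k fun t => v t.succ) i j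
      simp only [mtPow, Matrix.one_apply_eq, one_mul]
      rw [← hq]
      exact (mul_le_mul_of_nonneg_left (ih _ (fun t => hv t.succ) q j) (hB i q)).trans
        (le_mtMul _ _ _ _ _)
    · simpa [mtPow, Matrix.one_apply_ne h] using mtPow_nonneg hB (k + 1) i j

theorem mtChain_le_mtF (A B : Matrix (Fin n) (Fin n) ℝ) (k : ℕ) (v : Fin (k + 1) → ℕ)
    (i j : Fin n) : mtChain A B k v i j ≤ mtF A B k (∑ t, v t) i j := by
  -- Tuples with prescribed sum `m` form a finite set, since each entry is at most `m`.
  have hfin : Finite { w : Fin (k + 1) → ℕ // ∑ t, w t = ∑ t, v t } := by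
    refine Set.Finite.to_subtype ((Set.finite_Iic fun _ => ∑ t, v t).subset ?_)
    intro w hw t
    have hw' : ∑ t, w t = ∑ t, v t := hw
    rw [← hw']
    exact Finset.single_le_sum (fun _ _ => Nat.zero_le _) (Finset.mem_univ t)
  exact le_ciSup (f := fun w : { w : Fin (k + 1) → ℕ // ∑ t, w t = ∑ t, v t } =>
    mtChain A B k w.1 i j) (Set.finite_range _).bddAbove ⟨v, rfl⟩

theorem mtPow_le_mtStar {l : ℕ} (hl : l < n) (i j : Fin n) :
    mtPow C l i j ≤ mtStar C i j :=
  le_biSup_finset (f := fun l => mtPow C l i j) (Finset.mem_range.2 hl)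

theorem mtStar_nonneg (hC : ∀ i j, 0 ≤ C i j) (i j : Fin n) : 0 ≤ mtStar C i j :=
  Real.iSup_nonneg fun l => Real.iSup_nonneg fun _ => mtPow_nonneg hC l i j

end MaxTimes

/-- Binomial identity for the Kleene star: if `Tr(A ⊕ B) ≤ 1` then
`(A ⊕ B)* = A* ⊕ B* ⊕ max_{k,m} F_{km}` entrywise. -/
theorem max_times_binomial_star {n : ℕ} (A B : Matrix (Fin n) (Fin n) ℝ)
    (hA : ∀ i j, 0 ≤ A i j) (hB : ∀ i j, 0 ≤ B i j)
    (hTr : mtTr (fun i j => max (A i j) (B i j)) ≤ 1) :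
    ∀ i j, mtStar (fun i j => max (A i j) (B i j)) i j =
      max (mtStar A i j)
        (max (mtStar B i j)
          (⨆ k ∈ Finset.Icc 1 (n - 2), ⨆ m ∈ Finset.Icc 1 (n - k - 1),
            mtF A B k m i j)) := by
  intro i j
  have hC : ∀ i j, 0 ≤ (fun i j => max (A i j) (B i j) : Matrix (Fin n) (Fin n) ℝ) i j :=
    fun i j => le_max_of_le_left (hA i j)
  have hAC : ∀ i j, A i j ≤ (fun i j => max (A i j) (B i j) : Matrix (Fin n) (Fin n) ℝ) i j :=
    fun i j => le_max_left _ _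
  have hBC : ∀ i j, B i j ≤ (fun i j => max (A i j) (B i j) : Matrix (Fin n) (Fin n) ℝ) i j :=
    fun i j => le_max_right _ _
  have h0 := mtStar_nonneg hC i j
  apply le_antisymm
  · refine biSup_finset_le (le_max_of_le_left (mtStar_nonneg hA i j)) fun l hl => ?_
    rw [Finset.mem_range] at hl
    obtain ⟨k, v, hkv, hle⟩ := exists_chain_ge hA hB l i j
    refine hle.trans ?_
    rcases Nat.eq_zero_or_pos k with rfl | hk
    · refine le_max_of_le_left (mtPow_le_mtStar (l := v 0) ?_ i j)
      simp at hkv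
      omega
    refine le_max_of_le_right ?_
    rcases Nat.eq_zero_or_pos (∑ t, v t) with hm | hm
    · have hv : ∀ t, v t = 0 := by simpa [Finset.sum_eq_zero_iff] using hm
      exact le_max_of_le_left ((mtChain_zero_le hB k v hv i j).trans
        (mtPow_le_mtStar (by omega) i j))
    · refine le_max_of_le_right ((mtChain_le_mtF A B k v i j).trans ?_)
      refine (le_biSup_finset (s := Finset.Icc 1 (n - k - 1))
        (f := fun m => mtF A B k m i j) (Finset.mem_Icc.2 ⟨hm, by omega⟩)).trans ?_
      exact le_biSup_finset (f := fun k => ⨆ m ∈ Finset.Icc 1 (n - k - 1), mtF A B k m i j)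
        (Finset.mem_Icc.2 ⟨hk, by omega⟩)
  · refine max_le ?_ (max_le ?_ ?_)
    · exact biSup_finset_le h0 fun l hl =>
        (mtPow_mono hA hAC l i j).trans (mtPow_le_mtStar (Finset.mem_range.1 hl) i j)
    · exact biSup_finset_le h0 fun l hl =>
        (mtPow_mono hB hBC l i j).trans (mtPow_le_mtStar (Finset.mem_range.1 hl) i j)
    · refine biSup_finset_le h0 fun k hk => biSup_finset_le h0 fun m hm => ?_
      refine Real.iSup_le (fun w => ?_) h0
      refine (mtChain_le_mtPow hA hB hAC hBC k w.1 i j).trans (mtPow_le_mtStar ?_ i j)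
      rw [w.2]
      rw [Finset.mem_Icc] at hk hm
      omega
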